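/- arXiv:2202.09758 — 2 statements merged into one kernel-verified Lean document; each statement's English description precedes it below -/
import Mathlib

section
/- For fixed a ∈ (0, 1/2], the function f₃(r) = r²·𝒦ₐ(r) / [(1 + ((2a-1)/(2(1-a)))·r²)·𝒦ₐ(r) − ℰₐ(r)] is strictly decreasing on (0,1), with limit 2(1-a)/(2a²-2a+1) as r → 0⁺. -/
open Real Filter Set Topology

/-- Pochhammer symbol (rising factorial) for real `x`. -/
noncomputable def poch (x : ℝ) (n : ℕ) : ℝ := (ascPochhammer ℝ n).eval x

/-- Generalized complete elliptic integral of the first kind. -/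
noncomputable def Ka (a r : ℝ) : ℝ :=
  (π / 2) * ∑' n : ℕ, (poch a n * poch (1 - a) n / (n.factorial : ℝ) ^ 2) * r ^ (2 * n)

/-- Generalized complete elliptic integral of the second kind. -/
noncomputable def Ea (a r : ℝ) : ℝ :=
  (π / 2) * ∑' n : ℕ, (poch (a - 1) n * poch (1 - a) n / (n.factorial : ℝ) ^ 2) * r ^ (2 * n)

/-- Generalized Grötzsch ring function. -/
noncomputable def muG (a r : ℝ) : ℝ :=
  π / (2 * Real.sin (π * a)) * (Ka a (Real.sqrt (1 - r ^ 2)) / Ka a r)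

/-- Generalized Hersch–Pfluger distortion function. -/
noncomputable def phiHP (a K r : ℝ) : ℝ := Function.invFun (muG a) (muG a r / K)

/-- The function mₐ(r). -/
noncomputable def mA (a r : ℝ) : ℝ :=
  2 / (π * Real.sin (π * a)) * (1 - r ^ 2) * Ka a (Real.sqrt (1 - r ^ 2)) * Ka a r

/-- Digamma function (as the logarithmic derivative of Γ). -/
noncomputable def psiDG (x : ℝ) : ℝ := deriv (fun t => Real.log (Real.Gamma t)) x

/-- Ramanujan constant R(a). -/
noncomputable def RamanujanR (a : ℝ) : ℝ :=
  -2 * Real.eulerMascheroniConstant - psiDG a - psiDG (1 - a)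


noncomputable def cA (a : ℝ) (n : ℕ) : ℝ := poch a n * poch (1 - a) n / (n.factorial : ℝ) ^ 2

noncomputable def cD (a : ℝ) (n : ℕ) : ℝ :=
  (1 - a + n) / (n + 1) + (2*a - 1)/(2*(1 - a))

theorem poch_s (x : ℝ) (n : ℕ) : poch x (n+1) = poch x n * (x + n) := by
  simp [poch, ascPochhammer_succ_eval]

theorem poch_z (x : ℝ) : poch x 0 = 1 := by simp [poch]

theorem poch_l (a : ℝ) (n : ℕ) : poch (a-1) (n+1) = (a - 1) * poch a n := by
  induction n with
  | zero => simp [poch_s, poch_z]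
  | succ n ih => rw [poch_s, ih, poch_s]; push_cast; ring

theorem poch_b (x : ℝ) (h0 : 0 < x) (h1 : x < 1) (n : ℕ) :
    0 < poch x n ∧ poch x n ≤ n.factorial := by
  induction n with
  | zero => simp [poch_z]
  | succ n ih =>
    rw [poch_s]
    refine ⟨mul_pos ih.1 (by positivity), ?_⟩
    rw [Nat.factorial_succ]; push_cast
    rw [mul_comm]
    exact mul_le_mul (by linarith) ih.2 ih.1.le (by positivity)

theorem ratio_lemma (A d : ℕ → ℝ) (hA : ∀ n, 0 < A n) (hd : StrictMono d) (x y : ℝ)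
    (hx : 0 < x) (hxy : x < y)
    (s1 : Summable fun n => A n * x ^ n) (s2 : Summable fun n => A n * y ^ n)
    (s3 : Summable fun n => d n * A n * x ^ n) (s4 : Summable fun n => d n * A n * y ^ n) :
    (∑' n, d n * A n * x ^ n) * (∑' n, A n * y ^ n) <
      (∑' n, d n * A n * y ^ n) * (∑' n, A n * x ^ n) := by
  have hy : 0 < y := hx.trans hxy
  have p1 : 0 < ∑' n, A n * x ^ n :=
    s1.tsum_pos (fun n => (mul_pos (hA n) (pow_pos hx n)).le) 0 (mul_pos (hA 0) (pow_pos hx 0))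
  obtain ⟨l, hl⟩ : ∃ l, l * (∑' n, A n * x ^ n) = ∑' n, d n * A n * x ^ n :=
    ⟨_, div_mul_cancel₀ _ p1.ne'⟩
  have hX : HasSum (fun n => (d n - l) * A n * x ^ n) 0 := by
    have := s3.hasSum.sub (s1.hasSum.mul_left l)
    rw [hl, sub_self] at this
    refine this.congr_fun ?_ |> fun h => h
    intro n; ring
  have hY := s4.hasSum.sub (s2.hasSum.mul_left l)
  have hN : ∃ N, l ≤ d N := by
    by_contra! h
    have : 0 < ∑' n, -((d n - l) * A n * x ^ n) := by
      have key : ∀ n, 0 < -((d n - l) * A n * x ^ n) := fun n => by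
        have := mul_pos (mul_pos (sub_pos.2 (h n)) (hA n)) (pow_pos hx n)
        linarith
      exact hX.neg.summable.tsum_pos (fun n => (key n).le) 0 (key 0)
    rw [hX.neg.tsum_eq] at this
    simp at this
  classical
  obtain ⟨N, hN1, hN2⟩ : ∃ N, l ≤ d N ∧ ∀ m < N, d m < l :=
    ⟨Nat.find hN, Nat.find_spec hN, fun m hm => not_le.1 (Nat.find_min hN hm)⟩
  have hZ := hY.sub (hX.mul_left ((y / x) ^ N))
  have ht : 1 < y / x := (one_lt_div hx).2 hxy
  have e : ∀ n, (d n * A n * y ^ n - l * (A n * y ^ n) - (y / x) ^ N * ((d n - l) * A n * x ^ n))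
      = (d n - l) * ((y/x)^n - (y/x)^N) * (A n * x ^ n) := fun n => by
    have : y ^ n = (y/x)^n * x ^ n := by rw [← mul_pow, div_mul_cancel₀ _ hx.ne']
    rw [this]; ring
  have pos : 0 < ∑' n, (d n * A n * y ^ n - l * (A n * y ^ n) -
      (y / x) ^ N * ((d n - l) * A n * x ^ n)) := by
    refine hZ.summable.tsum_pos (fun n => ?_) (N+1) ?_
    · rw [e]
      refine mul_nonneg ?_ (mul_pos (hA n) (pow_pos hx n)).le
      rcases lt_or_ge n N with h | h
      · exact mul_nonneg_of_nonpos_of_nonpos (sub_nonpos.2 (hN2 n h).le)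
          (sub_nonpos.2 (pow_le_pow_right₀ ht.le h.le))
      · exact mul_nonneg (sub_nonneg.2 (hN1.trans (hd.monotone h)))
          (sub_nonneg.2 (pow_le_pow_right₀ ht.le h))
    · rw [e]
      refine mul_pos (mul_pos (sub_pos.2 (hN1.trans_lt (hd (Nat.lt_succ_self N))))
        (sub_pos.2 (pow_lt_pow_right₀ ht (Nat.lt_succ_self N)))) (mul_pos (hA _) (pow_pos hx _))
  rw [hZ.tsum_eq, mul_zero, sub_zero, sub_pos] at pos
  rw [← hl]
  nlinarith [mul_lt_mul_of_pos_right pos p1]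

theorem cA_b (a : ℝ) (h0 : 0 < a) (h1 : a < 1) (n : ℕ) : 0 < cA a n ∧ cA a n ≤ 1 := by
  have b1 := poch_b a h0 h1 n
  have b2 := poch_b (1-a) (by linarith) (by linarith) n
  have f : (0:ℝ) < n.factorial := by positivity
  refine ⟨div_pos (mul_pos b1.1 b2.1) (by positivity), ?_⟩
  rw [cA, div_le_one (by positivity), sq]
  exact mul_le_mul b1.2 b2.2 b2.1.le f.le

theorem cD_mono (a : ℝ) (h0 : 0 < a) : StrictMono (cD a) := by
  apply strictMono_nat_of_lt_succ
  intro n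
  unfold cD
  push_cast
  gcongr ?_ + _
  rw [div_lt_div_iff₀ (by positivity) (by positivity)]
  nlinarith

theorem cD_zero (a : ℝ) (h1 : a < 1) : cD a 0 = (2*a^2 - 2*a + 1)/(2*(1 - a)) := by
  have : 1 - a ≠ 0 := by linarith
  unfold cD; push_cast; field_simp; ring

theorem cD_b (a : ℝ) (h0 : 0 < a) (h1 : a ≤ 1/2) (n : ℕ) : 0 < cD a n ∧ cD a n ≤ 1 := by
  constructor
  · refine lt_of_lt_of_le ?_ ((cD_mono a h0).monotone (Nat.zero_le n))
    rw [cD_zero a (by linarith)]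
    apply div_pos <;> nlinarith [sq_nonneg (2*a-1)]
  · unfold cD
    have : (1 - a + n) / (n + 1 : ℝ) ≤ 1 := by
      rw [div_le_one (by positivity)]; linarith
    have : (2*a - 1)/(2*(1 - a)) ≤ 0 := div_nonpos_of_nonpos_of_nonneg (by linarith) (by linarith)
    linarith

theorem summ_b (c : ℕ → ℝ) (hc : ∀ n, 0 < c n ∧ c n ≤ 1) (x : ℝ) (h0 : 0 ≤ x) (h1 : x < 1) :
    Summable fun n => c n * x ^ n :=
  Summable.of_nonneg_of_le (fun n => mul_nonneg (hc n).1.le (pow_nonneg h0 n))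
    (fun n => mul_le_of_le_one_left (pow_nonneg h0 n) (hc n).2) (summable_geometric_of_lt_one h0 h1)

theorem cont_b (c : ℕ → ℝ) (hc : ∀ n, 0 < c n ∧ c n ≤ 1) :
    Tendsto (fun r : ℝ => ∑' n, c n * (r^2) ^ n) (nhdsWithin 0 (Set.Ioi 0)) (nhds (c 0)) := by
  have h : ContinuousOn (fun r : ℝ => ∑' n, c n * (r^2) ^ n) (Set.Icc (-(1/2)) (1/2)) := by
    refine continuousOn_tsum (u := fun n => (1/2:ℝ)^n) (fun n => by fun_prop)
      (summable_geometric_of_lt_one (by norm_num) (by norm_num)) ?_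
    intro n r hr
    have : r^2 ≤ 1/2 := by nlinarith [hr.1, hr.2]
    rw [Real.norm_of_nonneg (mul_nonneg (hc n).1.le (by positivity))]
    exact (mul_le_of_le_one_left (by positivity) (hc n).2).trans
      (pow_le_pow_left₀ (by positivity) this n)
  have h2 := (h.continuousAt (x := 0) (Icc_mem_nhds (by norm_num) (by norm_num))).tendsto
  have h3 : ∑' n, c n * ((0:ℝ)^2) ^ n = c 0 := by
    rw [tsum_eq_single 0]
    · simp
    · intro n hn; simp [hn]
  rw [h3] at h2
  exact h2.mono_left nhdsWithin_le_nhds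

theorem den_eq (a : ℝ) (h0 : 0 < a) (h1 : a ≤ 1/2) (r : ℝ) (hr : r ∈ Set.Ioo (0:ℝ) 1) :
    (1 + ((2*a - 1)/(2*(1 - a))) * r^2) * Ka a r - Ea a r =
      (π/2) * (r^2 * ∑' n, cD a n * cA a n * (r^2)^n) := by
  have hx0 : 0 ≤ r^2 := by positivity
  have hx1 : r^2 < 1 := by nlinarith [hr.1, hr.2]
  have bA := cA_b a h0 (by linarith)
  have bD := cD_b a h0 h1
  have sA := summ_b (cA a) bA _ hx0 hx1
  have sD := summ_b (fun n => cD a n * cA a n)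
    (fun n => ⟨mul_pos (bD n).1 (bA n).1, mul_le_one₀ (bD n).2 (bA n).1.le (bA n).2⟩) _ hx0 hx1
  set c := (2*a - 1)/(2*(1 - a)) with hc
  set S := ∑' n, cA a n * (r^2)^n with hS
  set T := ∑' n, cD a n * cA a n * (r^2)^n with hT
  have hK : Ka a r = π/2 * S := by
    simp only [Ka, hS, cA, pow_mul]
  -- shifted difference
  have hE : HasSum (fun n => poch (a - 1) n * poch (1 - a) n / (n.factorial : ℝ) ^ 2 * r ^ (2 * n))
      (S - (r^2 * T - c * r^2 * S)) := by
    have sh : HasSum (fun n => cA a n * (r^2)^n -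
        poch (a - 1) n * poch (1 - a) n / (n.factorial : ℝ) ^ 2 * r ^ (2 * n))
        (r^2 * T - c * r^2 * S) := by
      rw [← hasSum_nat_add_iff' 1]
      simp only [Finset.sum_range_one]
      have e0 : cA a 0 * (r^2)^0 - poch (a - 1) 0 * poch (1 - a) 0 / ((0).factorial : ℝ) ^ 2 *
        r ^ (2 * 0) = 0 := by simp [cA, poch_z]
      rw [e0, sub_zero]
      have := (sD.hasSum.mul_left (r^2)).sub (sA.hasSum.mul_left (c * r^2))
      convert this using 2 with n
      rw [poch_l, cA, poch_s a, poch_s (1-a), cD, cA, Nat.factorial_succ, pow_mul, pow_succ (r^2) n,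
        ← hc]
      have f : (n.factorial : ℝ) ≠ 0 := by positivity
      have g : (n + 1 : ℝ) ≠ 0 := by positivity
      push_cast
      field_simp
      ring
    have := sA.hasSum.sub sh
    simpa using this
  rw [hK, Ea, hE.tsum_eq]
  ring

theorem f3_strictAnti_and_limit (a : ℝ) (ha : a ∈ Set.Ioc (0:ℝ) (1/2)) :
    StrictAntiOn (fun r : ℝ =>
        r^2 * Ka a r / ((1 + ((2*a - 1)/(2*(1 - a))) * r^2) * Ka a r - Ea a r))
      (Set.Ioo 0 1) ∧
    Filter.Tendsto (fun r : ℝ =>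
        r^2 * Ka a r / ((1 + ((2*a - 1)/(2*(1 - a))) * r^2) * Ka a r - Ea a r))
      (nhdsWithin 0 (Set.Ioi 0)) (nhds (2*(1 - a)/(2*a^2 - 2*a + 1))) := by
  obtain ⟨h0, h1⟩ := ha
  have bA := cA_b a h0 (by linarith)
  have bD := cD_b a h0 h1
  have bDA : ∀ n, 0 < cD a n * cA a n ∧ cD a n * cA a n ≤ 1 :=
    fun n => ⟨mul_pos (bD n).1 (bA n).1, mul_le_one₀ (bD n).2 (bA n).1.le (bA n).2⟩
  have key : ∀ r ∈ Set.Ioo (0:ℝ) 1,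
      r^2 * Ka a r / ((1 + ((2*a - 1)/(2*(1 - a))) * r^2) * Ka a r - Ea a r) =
      (∑' n, cA a n * (r^2)^n) / ∑' n, cD a n * cA a n * (r^2)^n := by
    intro r hr
    have hK : Ka a r = π/2 * ∑' n, cA a n * (r^2)^n := by simp only [Ka, cA, pow_mul]
    rw [den_eq a h0 h1 r hr, hK]
    have hp : π / 2 * r^2 ≠ 0 := by have := hr.1; positivity
    rw [← mul_assoc (π/2), ← mul_assoc (r^2), mul_comm (r^2) (π/2), mul_div_mul_left _ _ hp]
  constructor
  · intro r hr s hs hrs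
    have hr0 := hr.1
    have hx : 0 < r^2 := by positivity
    have hxy : r^2 < s^2 := by nlinarith
    have hy1 : s^2 < 1 := by nlinarith [hs.1, hs.2]
    have hy := hx.trans hxy
    have hx1 := hxy.trans hy1
    have sD := summ_b _ bDA
    have sA := summ_b _ bA
    have pos : ∀ x : ℝ, 0 < x → x < 1 → 0 < ∑' n, cD a n * cA a n * x^n := fun x hx hx1 =>
      (sD x hx.le hx1).tsum_pos (fun n => (mul_pos (bDA n).1 (pow_pos hx n)).le) 0
        (mul_pos (bDA 0).1 (pow_pos hx 0))
    have := ratio_lemma (cA a) (cD a) (fun n => (bA n).1) (cD_mono a h0) (r^2) (s^2) hx hxy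
      (sA _ hx.le hx1) (sA _ hy.le hy1) (sD _ hx.le hx1) (sD _ hy.le hy1)
    simp only [key r hr, key s hs]
    rw [div_lt_div_iff₀ (pos _ hy hy1) (pos _ hx hx1)]
    linarith
  · have t := (cont_b _ bA).div (cont_b _ bDA) (bDA 0).1.ne'
    have e : cA a 0 / (cD a 0 * cA a 0) = 2*(1 - a)/(2*a^2 - 2*a + 1) := by
      have : cA a 0 = 1 := by simp [cA, poch_z]
      rw [this, mul_one, cD_zero a (by linarith), one_div_div]
    rw [e] at t
    refine t.congr' ?_
    filter_upwards [Ioo_mem_nhdsGT (zero_lt_one' ℝ)] with r hr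
    exact (key r hr).symm
end

section
/- For fixed a ∈ (0, 1/2], the function r ↦ (1-r²)·𝒦ₐ(r)² is strictly decreasing on (0,1), and consequently for a fixed t ∈ (0,1) the function f₆(r) = μₐ(r) + μₐ(t) − μₐ(rt) is strictly decreasing in r on (0,1); since f₆(r) → 0 as r → 1⁻, one obtains μₐ(r) + μₐ(t) > μₐ(rt) for all r, t ∈ (0,1). -/
open Real Filter Set Topology

noncomputable def Sg (c : ℕ → ℝ) (x : ℝ) : ℝ := ∑' n, c n * x ^ n

lemma Sg_summable {c : ℕ → ℝ} (hc : ∀ n, |c n| ≤ n + 1) {x : ℝ} (hx : |x| < 1) :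
    Summable (fun n => c n * x ^ n) := by
  have h1 : Summable (fun n : ℕ => ((n:ℝ) * |x| ^ n) + |x| ^ n) := by
    apply Summable.add
    · simpa using summable_pow_mul_geometric_of_norm_lt_one (R := ℝ) 1 (r := |x|) (by simpa using hx)
    · exact summable_geometric_of_lt_one (abs_nonneg _) hx
  refine Summable.of_norm_bounded h1 fun n => ?_
  rw [Real.norm_eq_abs, abs_mul, abs_pow]
  nlinarith [hc n, pow_nonneg (abs_nonneg x) n]

lemma Sg_hasDerivAt {c : ℕ → ℝ} (hc : ∀ n, |c n| ≤ 1) {x : ℝ} (hx : |x| < 1) :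
    HasDerivAt (Sg c) (Sg (fun n => (n + 1) * c (n + 1)) x) x := by
  obtain ⟨ρ, h1, h2⟩ := exists_between hx
  have hρ : 0 < ρ := (abs_nonneg x).trans_lt h1
  have hu : Summable (fun n : ℕ => (n : ℝ) * ρ ^ (n - 1)) := by
    rw [← summable_nat_add_iff 1]
    have := Sg_summable (c := fun n => (n:ℝ) + 1) (fun n => by rw [abs_of_nonneg]; positivity)
      (x := ρ) (by rwa [abs_of_pos hρ])
    simpa using this
  have key := hasDerivAt_tsum_of_isPreconnected (g := fun n y => c n * y ^ n)
    (g' := fun n y => c n * (n * y ^ (n - 1))) (t := Metric.ball (0:ℝ) ρ) (y₀ := 0) (y := x) hu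
    Metric.isOpen_ball (convex_ball _ _).isPreconnected
    (fun n y _ => by simpa using (hasDerivAt_pow n y).const_mul (c n))
    (fun n y hy => by
      have hy' : |y| ≤ ρ := by simpa using (le_of_lt (by simpa using hy : |y| < ρ))
      rw [Real.norm_eq_abs, abs_mul, abs_mul, abs_pow, Nat.abs_cast]
      calc |c n| * (n * |y| ^ (n-1)) ≤ 1 * (n * ρ ^ (n-1)) := by gcongr; exact hc n
        _ = _ := one_mul _)
    (by simpa using hρ) (Sg_summable (fun n => (hc n).trans (by simp)) (by simp))
    (by simpa using h1)
  refine key.congr_deriv ?_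
  have hs : Summable (fun n : ℕ => c n * ((n:ℝ) * x ^ (n - 1))) := by
    refine Summable.of_norm_bounded hu fun n => ?_
    rw [Real.norm_eq_abs, abs_mul, abs_mul, abs_pow, Nat.abs_cast]
    calc |c n| * (n * |x| ^ (n-1)) ≤ 1 * (n * ρ ^ (n-1)) := by gcongr; exact hc n
      _ = _ := one_mul _
  rw [hs.tsum_eq_zero_add]
  simp only [Sg, Nat.cast_zero, zero_mul, mul_zero, zero_add, Nat.add_sub_cancel]
  apply tsum_congr
  intro n
  push_cast
  ring

/-- coefficients -/
noncomputable def cf (a : ℝ) (n : ℕ) : ℝ := poch a n * poch (1 - a) n / (n.factorial : ℝ) ^ 2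

lemma cf_zero (a : ℝ) : cf a 0 = 1 := by simp [cf, poch]

lemma cf_succ (a : ℝ) (n : ℕ) :
    cf a (n+1) = cf a n * ((n^2 + n + a * (1 - a)) / (n+1)^2) := by
  have : (n.factorial : ℝ) ≠ 0 := by positivity
  have h2 : (n:ℝ) + 1 ≠ 0 := by positivity
  simp only [cf, poch, ascPochhammer_succ_eval, Nat.factorial_succ]
  push_cast
  field_simp
  ring

lemma cf_pos {a : ℝ} (ha : a ∈ Set.Ioc (0:ℝ) (1/2)) (n : ℕ) : 0 < cf a n := by
  have hb : 0 < a * (1 - a) := mul_pos ha.1 (by linarith [ha.2])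
  induction n with
  | zero => simp [cf_zero]
  | succ n ih => rw [cf_succ]; positivity

lemma ab_le (a : ℝ) : a * (1 - a) ≤ 1/4 := by nlinarith [sq_nonneg (a - 1/2)]

lemma cf_le {a : ℝ} (ha : a ∈ Set.Ioc (0:ℝ) (1/2)) (n : ℕ) : cf a n ≤ 1 := by
  induction n with
  | zero => simp [cf_zero]
  | succ n ih =>
    rw [cf_succ]
    have h0 := cf_pos ha n
    have : ((n:ℝ)^2 + n + a * (1 - a)) / (n+1)^2 ≤ 1 := by
      rw [div_le_one (by positivity)]
      nlinarith [ab_le a, (Nat.cast_nonneg n : (0:ℝ) ≤ n)]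
    nlinarith

lemma cf_abs {a : ℝ} (ha : a ∈ Set.Ioc (0:ℝ) (1/2)) (n : ℕ) : |cf a n| ≤ 1 := by
  rw [abs_of_pos (cf_pos ha n)]; exact cf_le ha n

lemma cf_lower {a : ℝ} (ha : a ∈ Set.Ioc (0:ℝ) (1/2)) (n : ℕ) :
    a * (1 - a) ≤ (n + 1) * cf a (n + 1) := by
  have hb : 0 < a * (1 - a) := mul_pos ha.1 (by linarith [ha.2])
  induction n with
  | zero => rw [cf_succ, cf_zero]; simp
  | succ n ih =>
    refine ih.trans ?_
    rw [cf_succ a (n+1)]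
    have h0 := cf_pos ha (n+1)
    push_cast
    rw [show ((n:ℝ)+1+1) * (cf a (n+1) * ((((n:ℝ)+1)^2 + (n+1) + a*(1-a)) / (n+1+1)^2))
      = cf a (n+1) * ((((n:ℝ)+1)^2 + (n+1) + a*(1-a)) / (n+1+1)) by field_simp]
    rw [mul_comm]
    gcongr
    rw [le_div_iff₀ (by positivity)]
    nlinarith

noncomputable def FF (a x : ℝ) : ℝ := Sg (cf a) x
noncomputable def DD (a x : ℝ) : ℝ := Sg (fun n => (n + 1) * cf a (n + 1)) x
noncomputable def QQ (a x : ℝ) : ℝ := a * (1 - a) * Sg (fun n => cf a (n - 1) / n) x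

section
variable {a : ℝ} (ha : a ∈ Set.Ioc (0:ℝ) (1/2)) {x : ℝ}

lemma FF_deriv (ha : a ∈ Set.Ioc (0:ℝ) (1/2)) (hx : |x| < 1) :
    HasDerivAt (FF a) (DD a x) x := Sg_hasDerivAt (cf_abs ha) hx

lemma q_abs (ha : a ∈ Set.Ioc (0:ℝ) (1/2)) (n : ℕ) : |cf a (n - 1) / n| ≤ 1 := by
  rcases n with _ | n
  · simp
  · rw [abs_div, Nat.abs_cast]
    apply div_le_one_of_le₀ _ (by positivity)
    refine (cf_abs ha _).trans ?_
    simp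

lemma QQ_deriv (ha : a ∈ Set.Ioc (0:ℝ) (1/2)) (hx : |x| < 1) :
    HasDerivAt (QQ a) (a * (1 - a) * FF a x) x := by
  have := (Sg_hasDerivAt (q_abs ha) hx).const_mul (a * (1 - a))
  refine this.congr_deriv ?_
  unfold FF
  congr 2
  funext n
  have : (n:ℝ) + 1 ≠ 0 := by positivity
  simp only [Nat.add_sub_cancel]
  push_cast
  field_simp

lemma DD_summable (ha : a ∈ Set.Ioc (0:ℝ) (1/2)) (hx : |x| < 1) :
    Summable (fun n : ℕ => ((n:ℝ) + 1) * cf a (n + 1) * x ^ n) := by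
  apply Sg_summable _ hx
  intro n
  rw [abs_mul, abs_of_nonneg (by positivity : (0:ℝ) ≤ n + 1)]
  nlinarith [cf_abs ha (n+1), (Nat.cast_nonneg n : (0:ℝ) ≤ n)]

lemma DD_eq (ha : a ∈ Set.Ioc (0:ℝ) (1/2)) (hx : |x| < 1) :
    (1 - x) * DD a x = a * (1 - a) * Sg (fun n => cf a n / (n + 1)) x := by
  have s1 := DD_summable ha hx
  have s2 : Summable (fun n : ℕ => (n:ℝ) * cf a n * x ^ n) := by
    apply Sg_summable _ hx
    intro n
    rw [abs_mul, abs_of_nonneg (by positivity : (0:ℝ) ≤ n)]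
    nlinarith [cf_abs ha n, (Nat.cast_nonneg n : (0:ℝ) ≤ n)]
  have e2 : x * DD a x = ∑' n : ℕ, (n:ℝ) * cf a n * x ^ n := by
    rw [s2.tsum_eq_zero_add]
    simp only [DD, Sg, Nat.cast_zero, zero_mul, zero_add]
    rw [← tsum_mul_left]
    apply tsum_congr
    intro n
    push_cast
    ring
  rw [sub_mul, one_mul, e2, DD, Sg, ← s1.tsum_sub s2, Sg, ← tsum_mul_left]
  apply tsum_congr
  intro n
  have : (n:ℝ) + 1 ≠ 0 := by positivity
  rw [cf_succ]
  field_simp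
  ring

lemma QQ_eq (ha : a ∈ Set.Ioc (0:ℝ) (1/2)) (hx : |x| < 1) :
    x * (1 - x) * DD a x = QQ a x := by
  rw [mul_assoc, DD_eq ha hx, QQ]
  have s : Summable (fun n : ℕ => cf a (n - 1) / n * x ^ n) :=
    Sg_summable (fun n => (q_abs ha n).trans (by simp)) hx
  have : Sg (fun n => cf a (n - 1) / n) x = x * Sg (fun n => cf a n / (n + 1)) x := by
    rw [Sg, s.tsum_eq_zero_add]
    simp only [Sg, Nat.cast_zero, div_zero, zero_mul, zero_add, Nat.add_sub_cancel]
    rw [← tsum_mul_left]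
    apply tsum_congr
    intro n
    push_cast
    ring
  rw [this]; ring

lemma FF_summable (ha : a ∈ Set.Ioc (0:ℝ) (1/2)) (hx : |x| < 1) :
    Summable (fun n : ℕ => cf a n * x ^ n) :=
  Sg_summable (fun n => (cf_abs ha n).trans (by simp)) hx

lemma FF_pos (ha : a ∈ Set.Ioc (0:ℝ) (1/2)) (h0 : 0 ≤ x) (h1 : x < 1) : 0 < FF a x := by
  have hx : |x| < 1 := by rwa [abs_of_nonneg h0]
  apply (FF_summable ha hx).tsum_pos _ 0
  · simp [cf_zero]
  · intro n
    have := cf_pos ha n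
    positivity

lemma DD_pos (ha : a ∈ Set.Ioc (0:ℝ) (1/2)) (h0 : 0 ≤ x) (h1 : x < 1) : 0 < DD a x := by
  have hx : |x| < 1 := by rwa [abs_of_nonneg h0]
  apply (DD_summable ha hx).tsum_pos _ 0
  · have := cf_pos ha 1
    simpa
  · intro n
    have := cf_pos ha (n+1)
    positivity

lemma DD_lt (ha : a ∈ Set.Ioc (0:ℝ) (1/2)) (h0 : 0 ≤ x) (h1 : x < 1) :
    2 * ((1 - x) * DD a x) < FF a x := by
  have hx : |x| < 1 := by rwa [abs_of_nonneg h0]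
  have hF := FF_pos ha h0 h1
  rw [DD_eq ha hx]
  have hb : 0 < a * (1 - a) := mul_pos ha.1 (by linarith [ha.2])
  have hle : ∀ n : ℕ, cf a n / (n + 1) ≤ cf a n := fun n =>
    div_le_self (cf_pos ha n).le (by simp)
  have : Sg (fun n => cf a n / (n + 1)) x ≤ FF a x := by
    refine Summable.tsum_le_tsum (fun n => ?_) ?_ (FF_summable ha hx)
    · gcongr; exact hle n
    · apply Sg_summable _ hx
      intro n
      have := cf_pos ha n
      rw [abs_of_nonneg (by positivity)]
      refine (hle n).trans ((cf_le ha n).trans (by simp))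
  nlinarith [ab_le a]

lemma H_anti (ha : a ∈ Set.Ioc (0:ℝ) (1/2)) :
    StrictAntiOn (fun x => (1 - x) * FF a x ^ 2) (Set.Ioo 0 1) := by
  have hd : ∀ x ∈ Set.Ioo (0:ℝ) 1, HasDerivAt (fun x => (1 - x) * FF a x ^ 2)
      (FF a x * (2 * ((1 - x) * DD a x) - FF a x)) x := by
    intro x hx
    have hx' : |x| < 1 := by rw [abs_of_pos hx.1]; exact hx.2
    have := ((hasDerivAt_id x).const_sub 1).mul ((FF_deriv ha hx').pow 2)
    refine this.congr_deriv ?_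
    simp
    ring
  apply strictAntiOn_of_deriv_neg (convex_Ioo 0 1)
  · exact fun x hx => (hd x hx).continuousAt.continuousWithinAt
  · intro x hx
    rw [interior_Ioo] at hx
    rw [(hd x hx).deriv]
    have := FF_pos ha hx.1.le hx.2
    have := DD_lt ha hx.1.le hx.2
    apply mul_neg_of_pos_of_neg <;> linarith

lemma refl_deriv {f : ℝ → ℝ} {f' : ℝ} (h : HasDerivAt f f' (1 - x)) :
    HasDerivAt (fun y => f (1 - y)) (-f') x := by
  have := h.comp x ((hasDerivAt_id x).const_sub 1)
  exact this.congr_deriv (by simp)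

lemma W_exists (ha : a ∈ Set.Ioc (0:ℝ) (1/2)) :
    ∃ W : ℝ, 0 < W ∧ ∀ x ∈ Set.Ioo (0:ℝ) 1, QQ a x * FF a (1 - x) + FF a x * QQ a (1 - x) = W := by
  have hd : ∀ x ∈ Set.Ioo (0:ℝ) 1,
      HasDerivAt (fun x => QQ a x * FF a (1 - x) + FF a x * QQ a (1 - x)) 0 x := by
    intro x hx
    have hx' : |x| < 1 := by rw [abs_of_pos hx.1]; exact hx.2
    have hx2 : |1 - x| < 1 := by rw [abs_of_pos (by linarith [hx.2])]; linarith [hx.1]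
    have := ((QQ_deriv ha hx').mul (refl_deriv (FF_deriv ha hx2))).add
      ((FF_deriv ha hx').mul (refl_deriv (QQ_deriv ha hx2)))
    refine this.congr_deriv ?_
    rw [← QQ_eq ha hx', ← QQ_eq ha hx2]
    ring
  refine ⟨QQ a (1/2) * FF a (1 - 1/2) + FF a (1/2) * QQ a (1 - 1/2), ?_, fun x hx => ?_⟩
  · have h1 := FF_pos ha (x := 1/2) (by norm_num) (by norm_num)
    have h2 := DD_pos ha (x := 1/2) (by norm_num) (by norm_num)
    norm_num
    rw [← QQ_eq ha (by rw [abs_of_pos] <;> norm_num)]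
    norm_num at h1 h2 ⊢
    positivity
  · refine isOpen_Ioo.is_const_of_deriv_eq_zero isPreconnected_Ioo
      (fun y hy => (hd y hy).differentiableAt.differentiableWithinAt)
      (fun y hy => (hd y hy).deriv) hx (by norm_num)

lemma M_deriv (ha : a ∈ Set.Ioc (0:ℝ) (1/2)) :
    ∃ W : ℝ, 0 < W ∧ ∀ x ∈ Set.Ioo (0:ℝ) 1,
      HasDerivAt (fun x => FF a (1 - x) / FF a x) (-(W / (x * ((1 - x) * FF a x ^ 2)))) x := by
  obtain ⟨W, hW, h⟩ := W_exists ha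
  refine ⟨W, hW, fun x hx => ?_⟩
  have hx' : |x| < 1 := by rw [abs_of_pos hx.1]; exact hx.2
  have hx2 : |1 - x| < 1 := by rw [abs_of_pos (by linarith [hx.2])]; linarith [hx.1]
  have hF := FF_pos ha hx.1.le hx.2
  have := (refl_deriv (FF_deriv ha hx2)).div (FF_deriv ha hx') hF.ne'
  refine this.congr_deriv ?_
  rw [← h x hx, ← QQ_eq ha hx', ← QQ_eq ha hx2]
  have h1 : x ≠ 0 := hx.1.ne'
  have h2 : 1 - x ≠ 0 := by linarith [hx.2]
  field_simp
  ring

lemma FF_lower (ha : a ∈ Set.Ioc (0:ℝ) (1/2)) (h0 : 0 ≤ x) (h1 : x < 1) :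
    a * (1 - a) * (-Real.log (1 - x)) ≤ FF a x := by
  have hx : |x| < 1 := by rwa [abs_of_nonneg h0]
  have hs := (Real.hasSum_pow_div_log_of_abs_lt_one hx).mul_left (a * (1 - a))
  rw [FF, Sg, (FF_summable ha hx).tsum_eq_zero_add, ← hs.tsum_eq]
  refine le_add_of_nonneg_of_le (by simp [cf_zero]) ?_
  refine Summable.tsum_le_tsum (fun n => ?_) hs.summable
    ((summable_nat_add_iff 1).2 (FF_summable ha hx))
  have := cf_lower ha n
  rw [← mul_div_assoc, div_le_iff₀ (by positivity)]
  have hp : 0 ≤ x ^ (n+1) := by positivity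
  nlinarith

lemma M_tendsto (ha : a ∈ Set.Ioc (0:ℝ) (1/2)) :
    Tendsto (fun x => FF a (1 - x) / FF a x) (𝓝[<] 1) (𝓝 0) := by
  have hb : 0 < a * (1 - a) := mul_pos ha.1 (by linarith [ha.2])
  have t0 : Tendsto (fun x : ℝ => 1 - x) (𝓝[<] 1) (𝓝[>] 0) := by
    apply tendsto_nhdsWithin_iff.2 ⟨?_, ?_⟩
    · have : Tendsto (fun x : ℝ => 1 - x) (𝓝 1) (𝓝 (1 - 1)) := by
        apply Continuous.tendsto; fun_prop
      rw [sub_self] at this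
      exact this.mono_left nhdsWithin_le_nhds
    · filter_upwards [self_mem_nhdsWithin] with x hx
      simpa using hx
  have tF : Tendsto (FF a) (𝓝[<] 1) atTop := by
    have : Tendsto (fun x : ℝ => a * (1 - a) * (-Real.log (1 - x))) (𝓝[<] 1) atTop :=
      (tendsto_neg_atBot_atTop.comp (Real.tendsto_log_nhdsGT_zero.comp t0)).const_mul_atTop hb
    refine tendsto_atTop_mono' _ ?_ this
    filter_upwards [Ioo_mem_nhdsLT (zero_lt_one (α := ℝ))] with x hx
    exact FF_lower ha hx.1.le hx.2
  have tG : Tendsto (fun x => FF a (1 - x)) (𝓝[<] 1) (𝓝 (FF a 0)) :=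
    (FF_deriv ha (x := 0) (by simp)).continuousAt.tendsto.comp
      (t0.mono_right nhdsWithin_le_nhds)
  exact tG.div_atTop tF

lemma Ka_eq (r : ℝ) : Ka a r = π / 2 * FF a (r ^ 2) := by
  simp only [Ka, FF, Sg, cf, pow_mul]

lemma muG_eq {r : ℝ} (hr : r ∈ Set.Ioo (0:ℝ) 1) :
    muG a r = π / (2 * Real.sin (π * a)) * (FF a (1 - r ^ 2) / FF a (r ^ 2)) := by
  have h : 0 ≤ 1 - r ^ 2 := by nlinarith [hr.1, hr.2]
  rw [muG, Ka_eq, Ka_eq, Real.sq_sqrt h, mul_div_mul_left _ _ (by positivity)]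

end

lemma sq_mem {r : ℝ} (hr : r ∈ Set.Ioo (0:ℝ) 1) : r ^ 2 ∈ Set.Ioo (0:ℝ) 1 :=
  ⟨by have := hr.1; positivity, by nlinarith [hr.1, hr.2]⟩

lemma mul_mem {r t : ℝ} (hr : r ∈ Set.Ioo (0:ℝ) 1) (ht : t ∈ Set.Ioo (0:ℝ) 1) :
    r * t ∈ Set.Ioo (0:ℝ) 1 :=
  ⟨mul_pos hr.1 ht.1, by nlinarith [hr.1, hr.2, ht.1, ht.2]⟩

lemma muG_deriv {a : ℝ} (ha : a ∈ Set.Ioc (0:ℝ) (1/2)) :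
    ∃ C : ℝ, 0 < C ∧ ∀ r ∈ Set.Ioo (0:ℝ) 1,
      HasDerivAt (muG a) (-(C / (r * ((1 - r ^ 2) * FF a (r ^ 2) ^ 2)))) r := by
  obtain ⟨W, hW, h⟩ := M_deriv ha
  have hs : 0 < Real.sin (π * a) := by
    apply Real.sin_pos_of_pos_of_lt_pi
    · have := ha.1; positivity
    · nlinarith [ha.2, Real.pi_pos]
  refine ⟨π / (2 * Real.sin (π * a)) * (2 * W), by positivity, fun r hr => ?_⟩
  have h1 := (HasDerivAt.comp r (h := fun y : ℝ => y ^ 2) (h _ (sq_mem hr)) (hasDerivAt_pow 2 r)).const_mul (π / (2 * Real.sin (π * a)))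
  have h2 : HasDerivAt (muG a) _ r := h1.congr_of_eventuallyEq (by
    filter_upwards [isOpen_Ioo.mem_nhds hr] with y hy
    rw [muG_eq hy]; rfl)
  refine h2.congr_deriv ?_
  have hF := FF_pos ha (sq_mem hr).1.le (sq_mem hr).2
  have h3 : r ≠ 0 := hr.1.ne'
  have h4 : 1 - r ^ 2 ≠ 0 := by linarith [(sq_mem hr).2]
  field_simp
  norm_num

lemma muG_tendsto {a : ℝ} (ha : a ∈ Set.Ioc (0:ℝ) (1/2)) :
    Tendsto (muG a) (𝓝[<] 1) (𝓝 0) := by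
  have t : Tendsto (fun r : ℝ => r ^ 2) (𝓝[<] 1) (𝓝[<] 1) := by
    apply tendsto_nhdsWithin_iff.2 ⟨?_, ?_⟩
    · have : Tendsto (fun x : ℝ => x ^ 2) (𝓝 1) (𝓝 (1 ^ 2)) := by
        apply Continuous.tendsto; fun_prop
      rw [one_pow] at this
      exact this.mono_left nhdsWithin_le_nhds
    · filter_upwards [Ioo_mem_nhdsLT (zero_lt_one (α := ℝ))] with x hx
      exact (sq_mem hx).2
  have h := ((M_tendsto ha).comp t).const_mul (π / (2 * Real.sin (π * a)))
  rw [mul_zero] at h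
  refine h.congr' ?_
  filter_upwards [Ioo_mem_nhdsLT (zero_lt_one (α := ℝ))] with x hx
  rw [muG_eq hx]; rfl

lemma f6_anti {a : ℝ} (ha : a ∈ Set.Ioc (0:ℝ) (1/2)) {t : ℝ} (ht : t ∈ Set.Ioo (0:ℝ) 1) :
    StrictAntiOn (fun r : ℝ => muG a r + muG a t - muG a (r * t)) (Set.Ioo 0 1) := by
  obtain ⟨C, hC, h⟩ := muG_deriv ha
  have hd : ∀ r ∈ Set.Ioo (0:ℝ) 1, HasDerivAt (fun r : ℝ => muG a r + muG a t - muG a (r * t))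
      (-(C / (r * ((1 - r ^ 2) * FF a (r ^ 2) ^ 2))) -
        -(C / (r * t * ((1 - (r * t) ^ 2) * FF a ((r * t) ^ 2) ^ 2))) * t) r := by
    intro r hr
    have h2 : HasDerivAt (fun r : ℝ => r * t) t r := by
      simpa using (hasDerivAt_id r).mul_const t
    exact ((h r hr).add_const _).sub
      (HasDerivAt.comp r (h₂ := muG a) (h _ (mul_mem hr ht)) h2)
  apply strictAntiOn_of_deriv_neg (convex_Ioo 0 1)
  · exact fun x hx => (hd x hx).continuousAt.continuousWithinAt
  · intro r hr
    rw [interior_Ioo] at hr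
    rw [(hd r hr).deriv]
    have hm := mul_mem hr ht
    have hlt : (r * t) ^ 2 < r ^ 2 := by
      have := hr.1
      have : r * t < r := by nlinarith [ht.2]
      exact pow_lt_pow_left₀ this hm.1.le (by norm_num)
    have hH := H_anti ha (sq_mem hm) (sq_mem hr) hlt
    have p1 : 0 < (1 - r ^ 2) * FF a (r ^ 2) ^ 2 := by
      have := FF_pos ha (sq_mem hr).1.le (sq_mem hr).2
      have : 0 < 1 - r ^ 2 := by linarith [(sq_mem hr).2]
      positivity
    simp only at hH
    generalize (1 - r ^ 2) * FF a (r ^ 2) ^ 2 = A at *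
    generalize (1 - (r * t) ^ 2) * FF a ((r * t) ^ 2) ^ 2 = B at *
    have hr0 := hr.1
    have ht0 := ht.1
    have hB : 0 < B := p1.trans hH
    have e : C / (r * t * B) * t = C / (r * B) := by field_simp
    have : C / (r * B) < C / (r * A) := by gcongr
    linarith

lemma f6_tendsto {a : ℝ} (ha : a ∈ Set.Ioc (0:ℝ) (1/2)) {t : ℝ} (ht : t ∈ Set.Ioo (0:ℝ) 1) :
    Filter.Tendsto (fun r : ℝ => muG a r + muG a t - muG a (r * t))
        (nhdsWithin 1 (Set.Iio 1)) (nhds 0) := by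
  obtain ⟨C, hC, h⟩ := muG_deriv ha
  have h1 : Tendsto (fun r : ℝ => r * t) (𝓝[<] 1) (𝓝 t) := by
    have : Tendsto (fun r : ℝ => r * t) (𝓝 1) (𝓝 (1 * t)) := by
      apply Continuous.tendsto; fun_prop
    rw [one_mul] at this
    exact this.mono_left nhdsWithin_le_nhds
  have h2 := (h t ht).continuousAt.tendsto.comp h1
  have h3 := ((muG_tendsto ha).add_const (muG a t)).sub h2
  simpa using h3

theorem mua_superadditive (a : ℝ) (ha : a ∈ Set.Ioc (0:ℝ) (1/2)) :
    StrictAntiOn (fun r : ℝ => (1 - r^2) * (Ka a r)^2) (Set.Ioo 0 1) ∧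
    (∀ t ∈ Set.Ioo (0:ℝ) 1,
      StrictAntiOn (fun r : ℝ => muG a r + muG a t - muG a (r * t)) (Set.Ioo 0 1) ∧
      Filter.Tendsto (fun r : ℝ => muG a r + muG a t - muG a (r * t))
        (nhdsWithin 1 (Set.Iio 1)) (nhds 0)) ∧
    ∀ r ∈ Set.Ioo (0:ℝ) 1, ∀ t ∈ Set.Ioo (0:ℝ) 1,
      muG a (r * t) < muG a r + muG a t := by
  refine ⟨?_, fun t ht => ⟨f6_anti ha ht, f6_tendsto ha ht⟩, ?_⟩
  · intro r hr s hs hrs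
    have := H_anti ha (sq_mem hr) (sq_mem hs) (pow_lt_pow_left₀ hrs hr.1.le (by norm_num))
    simp only [Ka_eq] at this ⊢
    have hp : 0 < (π / 2) ^ 2 := by positivity
    nlinarith
  · intro r hr t ht
    obtain ⟨s, hs1, hs2⟩ := exists_between hr.2
    have hs : s ∈ Set.Ioo (0:ℝ) 1 := ⟨hr.1.trans hs1, hs2⟩
    have h1 := f6_anti ha ht hr hs hs1
    have h2 : 0 ≤ muG a s + muG a t - muG a (s * t) := by
      refine le_of_tendsto (f6_tendsto ha ht) ?_
      filter_upwards [Ioo_mem_nhdsLT hs2] with y hy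
      exact (f6_anti ha ht hs ⟨hs.1.trans hy.1, hy.2⟩ hy.1).le
    simp only at h1
    linarith
end
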